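/- Let c ∈ [0,1] and suppose u is a solution of the traveling wave system for the Landau–Lifshitz equation with ‖u₃‖_{L^∞(ℝᴺ)} ≤ 1/2, satisfying the integral identities (i) ∫ϱ²|∇θ|² = c∫u₃∂₁θ and (ii) ∫|∇u₃|² + ∫u₃² = 2∫e(u)u₃² + c∫ϱ²u₃∂₁θ, where ϱ² = 1 − u₃². If additionally ∫|∇ϱ|² ≤ (7/18)∫u₃² and ∫ϱ²|∇θ|² ≤ (4/3)∫u₃², then ∫|∇u₃|² ≤ 2∫u₃² and E(u) = (1/2)∫(|∇ϱ|² + ϱ²|∇θ|² + |∇u₃|² + u₃²) ≤ 3∫u₃². -/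

import Mathlib

open MeasureTheory

/-- From the integral identities and the bounds on ∫|∇ϱ|² and ∫ϱ²|∇θ|², a solution with
    ‖u₃‖_∞ ≤ 1/2 satisfies ∫|∇u₃|² ≤ 2∫u₃² and E(u) ≤ 3∫u₃². -/
theorem stmt17 (N : ℕ) (hN : 1 ≤ N) (c : ℝ) (hc : c ∈ Set.Icc (0:ℝ) 1)
    (u₃ ϱ θ : EuclideanSpace ℝ (Fin N) → ℝ)
    (hϱ : ∀ x, (ϱ x)^2 = 1 - (u₃ x)^2)
    (hδ : ∀ x, |u₃ x| ≤ 1/2)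
    (hu₃ : Differentiable ℝ u₃) (hϱd : Differentiable ℝ ϱ) (hθ : Differentiable ℝ θ)
    (e d1θ : EuclideanSpace ℝ (Fin N) → ℝ)
    (hd1θ : ∀ x, d1θ x = fderiv ℝ θ x (EuclideanSpace.single ⟨0, by omega⟩ 1))
    (he : ∀ x, e x = (1/2) * (‖fderiv ℝ ϱ x‖^2 + (ϱ x)^2 * ‖fderiv ℝ θ x‖^2 +
                              ‖fderiv ℝ u₃ x‖^2 + (u₃ x)^2))
    (hint1 : Integrable (fun x => (u₃ x)^2) volume)
    (hint2 : Integrable (fun x => ‖fderiv ℝ u₃ x‖^2) volume)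
    (hint3 : Integrable (fun x => ‖fderiv ℝ ϱ x‖^2) volume)
    (hint4 : Integrable (fun x => (ϱ x)^2 * ‖fderiv ℝ θ x‖^2) volume)
    (hint5 : Integrable (fun x => u₃ x * d1θ x) volume)
    (hint6 : Integrable (fun x => e x * (u₃ x)^2) volume)
    (hint7 : Integrable (fun x => (ϱ x)^2 * u₃ x * d1θ x) volume)
    (hid1 : ∫ x, (ϱ x)^2 * ‖fderiv ℝ θ x‖^2 = c * ∫ x, u₃ x * d1θ x)
    (hid2 : (∫ x, ‖fderiv ℝ u₃ x‖^2) + (∫ x, (u₃ x)^2)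
            = 2 * (∫ x, e x * (u₃ x)^2) + c * ∫ x, (ϱ x)^2 * u₃ x * d1θ x)
    (h1 : ∫ x, ‖fderiv ℝ ϱ x‖^2 ≤ (7/18) * ∫ x, (u₃ x)^2)
    (h2 : ∫ x, (ϱ x)^2 * ‖fderiv ℝ θ x‖^2 ≤ (4/3) * ∫ x, (u₃ x)^2) :
    (∫ x, ‖fderiv ℝ u₃ x‖^2 ≤ 2 * ∫ x, (u₃ x)^2) ∧
    (∫ x, e x ≤ 3 * ∫ x, (u₃ x)^2) := by
  have hu2 : ∀ x, (u₃ x)^2 ≤ 1/4 := by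
    intro x
    have h := hδ x
    rw [abs_le] at h
    nlinarith [h.1, h.2]
  have hd : ∀ x, (d1θ x)^2 ≤ ‖fderiv ℝ θ x‖^2 := by
    intro x
    have h := (fderiv ℝ θ x).le_opNorm (EuclideanSpace.single ⟨0, by omega⟩ 1)
    rw [← hd1θ x] at h
    simp only [EuclideanSpace.norm_single, norm_one, mul_one, Real.norm_eq_abs] at h
    rw [← sq_abs (d1θ x)]
    exact pow_le_pow_left₀ (abs_nonneg _) h 2
  have hS : Integrable (fun x => ‖fderiv ℝ ϱ x‖^2 + (ϱ x)^2 * ‖fderiv ℝ θ x‖^2 +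
      ‖fderiv ℝ u₃ x‖^2 + (u₃ x)^2) volume := ((hint3.add hint4).add hint2).add hint1
  have hSi : ∫ x, (‖fderiv ℝ ϱ x‖^2 + (ϱ x)^2 * ‖fderiv ℝ θ x‖^2 +
      ‖fderiv ℝ u₃ x‖^2 + (u₃ x)^2) = (∫ x, ‖fderiv ℝ ϱ x‖^2) +
      (∫ x, (ϱ x)^2 * ‖fderiv ℝ θ x‖^2) + (∫ x, ‖fderiv ℝ u₃ x‖^2) + ∫ x, (u₃ x)^2 := by
    have a1 : Integrable (fun x => ‖fderiv ℝ ϱ x‖^2 + (ϱ x)^2 * ‖fderiv ℝ θ x‖^2) volume :=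
      hint3.add hint4
    have a2 : Integrable (fun x => ‖fderiv ℝ ϱ x‖^2 + (ϱ x)^2 * ‖fderiv ℝ θ x‖^2 +
      ‖fderiv ℝ u₃ x‖^2) volume := a1.add hint2
    rw [integral_add a2 hint1, integral_add a1 hint2, integral_add hint3 hint4]
  have hE : ∫ x, e x = (1/2) * ((∫ x, ‖fderiv ℝ ϱ x‖^2) +
      (∫ x, (ϱ x)^2 * ‖fderiv ℝ θ x‖^2) + (∫ x, ‖fderiv ℝ u₃ x‖^2) + ∫ x, (u₃ x)^2) := by
    rw [← hSi, ← integral_const_mul]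
    exact integral_congr_ae (Filter.Eventually.of_forall he)
  have hEu : ∫ x, e x * (u₃ x)^2 ≤ (1/8) * ((∫ x, ‖fderiv ℝ ϱ x‖^2) +
      (∫ x, (ϱ x)^2 * ‖fderiv ℝ θ x‖^2) + (∫ x, ‖fderiv ℝ u₃ x‖^2) + ∫ x, (u₃ x)^2) := by
    rw [← hSi, ← integral_const_mul]
    refine integral_mono hint6 (hS.const_mul _) fun x => ?_
    have h0 : 0 ≤ e x := by rw [he x]; positivity
    have h3 := mul_le_mul_of_nonneg_left (hu2 x) h0
    have h4 := he x
    simp only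
    linarith
  have hM : ∫ x, (ϱ x)^2 * u₃ x * d1θ x ≤ (1/2) * ((∫ x, (u₃ x)^2) +
      ∫ x, (ϱ x)^2 * ‖fderiv ℝ θ x‖^2) := by
    rw [← integral_add hint1 hint4, ← integral_const_mul]
    refine integral_mono hint7 ((hint1.add hint4).const_mul _) fun x => ?_
    have h3 := mul_le_mul_of_nonneg_left (hd x) (sq_nonneg (ϱ x))
    have h4 : (ϱ x)^2 * (u₃ x)^2 ≤ (u₃ x)^2 := by
      rw [hϱ x]; nlinarith [sq_nonneg ((u₃ x)^2)]
    have h5 := mul_nonneg (sq_nonneg (ϱ x)) (sq_nonneg (u₃ x - d1θ x))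
    simp only [Pi.add_apply]
    nlinarith
  have hB : 0 ≤ ∫ x, (u₃ x)^2 := integral_nonneg fun x => sq_nonneg _
  have hT : 0 ≤ ∫ x, (ϱ x)^2 * ‖fderiv ℝ θ x‖^2 := integral_nonneg fun x => by positivity
  have hcM : c * ∫ x, (ϱ x)^2 * u₃ x * d1θ x ≤ (1/2) * ((∫ x, (u₃ x)^2) +
      ∫ x, (ϱ x)^2 * ‖fderiv ℝ θ x‖^2) := by
    refine (mul_le_mul_of_nonneg_left hM hc.1).trans ?_
    exact mul_le_of_le_one_left (by positivity) hc.2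
  constructor
  · linarith
  · rw [hE]; linarith
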